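/- Let C be a compact strictly convex planar body whose boundary is traced by a C^∞, λ-periodic, affinely parametrized curve x with affine curvature k. For each n ≥ 3, let 0 ≤ s_{n,1} < … < s_{n,n} < λ be parameters of the vertices of a best approximating inscribed polygon with at most n vertices, indices extended cyclically by s_{n,i+n} = s_{n,i} + λ, and set λ_{n,i} := s_{n,i} − s_{n,i−1}. Then there exist a constant D > 0 and an integer N such that for all n ≥ N and all 1 ≤ i ≤ n: |λ_{n,i} − λ/n| ≤ D/n³. -/

import Mathlib

open Filter MeasureTheory
open scoped Topology

/-- The standard area form on the plane: `ω(u,v) = u₁v₂ − u₂v₁`. -/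
noncomputable def om (u v : ℝ × ℝ) : ℝ := u.1 * v.2 - u.2 * v.1

/-!
Moving a single vertex of a best inscribed polygon changes its area by that of a triangle over the
chord joining the two neighbouring vertices. Optimality therefore makes the tangent at each vertex
parallel to that chord, so both neighbours lie at the same height above the tangent. In affine arc
length this height is `h ^ 2 / 2 - k * h ^ 4 / 24 + O(h ^ 5)`, without a cubic term, and comparing
it for the two neighbours shows that consecutive gaps differ by only `O(gap ^ 4)`. Since the `n`
gaps average `λ / n`, some gap is at most this average; walking from it around the polygon keeps
every gap `O(1 / n)`, and the differences add up to `n * O(n ^ (-4)) = O(n ^ (-3))`.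
-/

section CyclicSequences

open Set

theorem injOn_Ico_of_periodic {G α : Type*} [AddCommGroup G] [LinearOrder G] [IsOrderedAddMonoid G]
    [Archimedean G] {f : G → α} {c a : G} (hf : Function.Periodic f c) (hc : 0 < c)
    (hinj : InjOn f (Ico a (a + c))) (b : G) : InjOn f (Ico b (b + c)) := by
  have map_toIcoMod (t : G) : f (toIcoMod hc a t) = f t := hf.sub_zsmul_eq _
  intro s hs t ht hst
  have hmod : toIcoMod hc a s = toIcoMod hc a t :=
    hinj (toIcoMod_mem_Ico hc a s) (toIcoMod_mem_Ico hc a t) <| by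
      rw [map_toIcoMod, map_toIcoMod, hst]
  rwa [toIcoMod_inj, ← toIcoMod_inj hc (c := b), (toIcoMod_eq_self hc).2 hs,
    (toIcoMod_eq_self hc).2 ht] at hmod

theorem strictMono_of_cyclic {s : ℤ → ℝ} {n : ℕ} {c : ℝ} (hn : 0 < n)
    (hcyc : ∀ i, s (i + n) = s i + c) (hlt : ∀ i : ℤ, 1 ≤ i → i < n → s i < s (i + 1))
    (hwrap : s n < s 1 + c) : StrictMono s := by
  refine strictMono_int_of_lt_succ fun i ↦ ?_
  have hgap : Function.Periodic (fun i ↦ s (i + 1) - s i) (n : ℤ) := fun i ↦ by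
    simp only [add_right_comm i _ 1, hcyc, add_sub_add_right_eq_sub]
  obtain ⟨j, ⟨hj₁, hjn⟩, hij⟩ := hgap.exists_mem_Ico (by exact_mod_cast hn) i 1
  have hj : s j < s (j + 1) := by
    have hjn : j ≤ n := by omega
    rcases hjn.lt_or_eq with hjn | rfl
    · exact hlt j hj₁ hjn
    · rwa [add_comm, hcyc]
  linarith

theorem le_add_mul_of_step_le {a : ℕ → ℝ} {n : ℕ} {b c M : ℝ} (h₀ : a 0 ≤ b) (hc : 0 ≤ c)
    (hM : b + n * c ≤ M) (hstep : ∀ j, a j ≤ M → a (j + 1) ≤ a j + c) {j : ℕ} (hj : j ≤ n) :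
    a j ≤ b + n * c := by
  suffices hlin : a j ≤ b + j * c from hlin.trans (by gcongr)
  induction j with
  | zero => simpa using h₀
  | succ j ih =>
    have hjn : (j : ℝ) * c ≤ n * c := by gcongr; omega
    have haj := ih (by omega)
    have := hstep j (by linarith)
    push_cast
    linarith

/-- The step bound is only required where `g ≤ 2 * m`: an upper bound by `2 * m` is propagated
together with the estimate itself. -/
theorem abs_sub_average_le {g : ℤ → ℝ} {n : ℕ} {m c : ℝ} (hn : 0 < n)
    (hg : Function.Periodic g (n : ℤ)) (hsum : ∑ j ∈ Finset.range n, g j = n * m) (hc : 0 ≤ c)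
    (hcm : n * c ≤ m) (hstep : ∀ i, g i ≤ 2 * m → |g (i + 1) - g i| ≤ c) (i : ℤ) :
    |g i - m| ≤ n * c := by
  have hne : (Finset.range n).Nonempty := Finset.nonempty_range_iff.2 hn.ne'
  have hsum' : ∑ j ∈ Finset.range n, g j = ∑ _j ∈ Finset.range n, m := by simpa using hsum
  have reach (k i : ℤ) : ∃ j : ℕ, j ≤ n ∧ g i = g (k + j) := by
    obtain ⟨l, ⟨hkl, hln⟩, hil⟩ := hg.exists_mem_Ico (by exact_mod_cast hn) i k
    exact ⟨(l - k).toNat, by omega, by rw [hil]; congr 1; omega⟩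
  obtain ⟨k, -, hk⟩ := Finset.exists_le_of_sum_le hne hsum'.le
  have upper (i : ℤ) : g i ≤ m + n * c := by
    obtain ⟨j, hj, hij⟩ := reach k i
    rw [hij]
    refine le_add_mul_of_step_le (a := fun j ↦ g (k + j)) (M := 2 * m) (by simpa using hk) hc
      (by linarith) (fun j hj ↦ ?_) hj
    have := (abs_le.1 (hstep _ hj)).2
    push_cast
    rw [← add_assoc]
    linarith
  obtain ⟨l, -, hl⟩ := Finset.exists_le_of_sum_le hne hsum'.ge
  have lower : -g i ≤ -m + n * c := by
    obtain ⟨j, hj, hij⟩ := reach l i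
    rw [hij]
    refine le_add_mul_of_step_le (a := fun j ↦ -g (l + j)) (by simpa using hl) hc le_rfl
      (fun j _ ↦ ?_) hj
    have := (abs_le.1 (hstep (l + j) (by linarith [upper (l + j)]))).1
    push_cast
    rw [← add_assoc]
    linarith
  exact abs_le.2 ⟨by linarith, by linarith [upper i]⟩

theorem sum_range_gap {s : ℤ → ℝ} {n : ℕ} {c : ℝ} (hcyc : ∀ i, s (i + n) = s i + c) :
    ∑ j ∈ Finset.range n, (s j - s (j - 1)) = c := by
  have htel := Finset.sum_range_sub (fun j : ℕ ↦ s (j - 1)) n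
  simp only [Nat.cast_add, Nat.cast_one, add_sub_cancel_right, Nat.cast_zero] at htel
  have hwrap := hcyc (0 - 1)
  rw [htel, show (n : ℤ) - 1 = 0 - 1 + n by ring, hwrap]
  ring

theorem exists_abs_gap_sub_le_of_large {c δ K : ℝ} (hc : 0 < c) (hδ : 0 < δ) (hK : 0 < K) {p : ℕ}
    (hp : 2 ≤ p) : ∃ D > 0, ∃ N : ℕ, ∀ n ≥ N, ∀ s : ℤ → ℝ, StrictMono s →
      (∀ i, s (i + n) = s i + c) →
      (∀ i, s i - s (i - 1) < δ →
        |(s (i + 1) - s i) - (s i - s (i - 1))| ≤ K * (s i - s (i - 1)) ^ (p + 1)) →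
      ∀ i, |s i - s (i - 1) - c / n| ≤ D / (n : ℝ) ^ p := by
  set D := K * (2 * c) ^ (p + 1) with hD
  obtain ⟨N, hN⟩ := exists_nat_gt (max 1 (max (2 * c / δ) (D / c)))
  simp only [max_lt_iff] at hN
  obtain ⟨hN₁, hNδ, hNc⟩ := hN
  refine ⟨D, by positivity, N, fun n hn s hs hcyc hstep i ↦ ?_⟩
  have hNn : (N : ℝ) ≤ n := by exact_mod_cast hn
  have hn₀ : (0 : ℝ) < n := by linarith
  have hδn : 2 * (c / n) < δ := by
    rw [← mul_div_assoc, div_lt_comm₀ hn₀ hδ]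
    linarith
  have htol : n * (D / (n : ℝ) ^ (p + 1)) = D / (n : ℝ) ^ p := by
    rw [pow_succ]; field_simp
  have hDn : D / (n : ℝ) ^ p ≤ c / n := calc
    D / (n : ℝ) ^ p ≤ D / (n : ℝ) ^ 2 := by gcongr; linarith
    _ = D / n / n := by ring
    _ ≤ c / n := by gcongr; rw [div_le_comm₀ hn₀ hc]; linarith
  rw [← htol] at hDn ⊢
  refine abs_sub_average_le (g := fun i ↦ s i - s (i - 1)) (by exact_mod_cast hn₀)
    (fun i ↦ ?_) ?_ (by positivity) hDn (fun i hi ↦ ?_) i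
  · simp only [add_sub_right_comm i _ 1, hcyc, add_sub_add_right_eq_sub]
  · rw [sum_range_gap hcyc, mul_div_cancel₀ _ hn₀.ne']
  · have hpos : 0 < s i - s (i - 1) := sub_pos.2 (hs (by omega))
    rw [add_sub_cancel_right]
    calc |s (i + 1) - s i - (s i - s (i - 1))|
        ≤ K * (s i - s (i - 1)) ^ (p + 1) := hstep i (hi.trans_lt hδn)
      _ ≤ K * (2 * (c / n)) ^ (p + 1) := by gcongr
      _ = D / (n : ℝ) ^ (p + 1) := by rw [hD, ← mul_div_assoc, div_pow, mul_div_assoc]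

theorem exists_abs_gap_sub_le {c δ K : ℝ} (hc : 0 < c) (hδ : 0 < δ) (hK : 0 < K) {p : ℕ}
    (hp : 2 ≤ p) : ∃ D > 0, ∀ n : ℕ, 0 < n → ∀ s : ℤ → ℝ, StrictMono s →
      (∀ i, s (i + n) = s i + c) →
      (∀ i, s i - s (i - 1) < δ →
        |(s (i + 1) - s i) - (s i - s (i - 1))| ≤ K * (s i - s (i - 1)) ^ (p + 1)) →
      ∀ i, |s i - s (i - 1) - c / n| ≤ D / (n : ℝ) ^ p := by
  obtain ⟨D, hD, N, hlarge⟩ := exists_abs_gap_sub_le_of_large hc hδ hK hp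
  refine ⟨max D (c * N ^ p), by positivity, fun n hn s hs hcyc hstep i ↦ ?_⟩
  rcases le_or_gt N n with hN | hN
  · exact (hlarge n hN s hs hcyc hstep i).trans (by gcongr; exact le_max_left _ _)
  have hn₁ : (1 : ℝ) ≤ n := by exact_mod_cast hn
  have hgap : s i ≤ s (i - 1) + c := by
    rw [← hcyc]
    exact hs.monotone (by omega)
  have hgap₀ : s (i - 1) < s i := hs (by omega)
  have hmean : c / n ≤ c := div_le_self hc.le hn₁
  have hmean₀ : 0 < c / n := by positivity
  calc |s i - s (i - 1) - c / n| ≤ c := abs_le.2 ⟨by linarith, by linarith⟩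
    _ ≤ c * N ^ p / n ^ p := by rw [le_div_iff₀ (by positivity)]; gcongr
    _ ≤ max D (c * N ^ p) / n ^ p := by gcongr; exact le_max_right _ _

end CyclicSequences

section Taylor

open Set
open scoped Nat

theorem abs_sub_taylor_le {f : ℝ → ℝ} {n : ℕ} {K : ℝ} (hf : ContDiff ℝ (n + 1) f)
    (hK : ∀ t, |iteratedDeriv (n + 1) f t| ≤ K) (s h : ℝ) :
    |f (s + h) - ∑ k ∈ Finset.range (n + 1), iteratedDeriv k f s * h ^ k / k !| ≤
      K * |h| ^ (n + 1) := by
  rcases eq_or_ne h 0 with rfl | hh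
  · simp [Finset.sum_range_succ']
  have hne : s ≠ s + h := by simpa [eq_comm] using hh
  obtain ⟨t, -, ht⟩ := taylor_mean_remainder_lagrange_iteratedDeriv hne hf.contDiffOn
  have hsum : taylorWithinEval f n (uIcc s (s + h)) s (s + h) =
      ∑ k ∈ Finset.range (n + 1), iteratedDeriv k f s * h ^ k / k ! := by
    rw [taylor_within_apply]
    refine Finset.sum_congr rfl fun k hk ↦ ?_
    have hkn : (k : WithTop ℕ∞) ≤ n + 1 := by exact_mod_cast (Finset.mem_range.1 hk).le
    rw [iteratedDerivWithin_eq_iteratedDeriv (uniqueDiffOn_uIcc hne) (hf.of_le hkn).contDiffAt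
      left_mem_uIcc, add_sub_cancel_left, smul_eq_mul]
    ring
  rw [← hsum, ht, add_sub_cancel_left, abs_div, abs_mul, abs_pow, Nat.abs_cast]
  calc |iteratedDeriv (n + 1) f t| * |h| ^ (n + 1) / (n + 1)!
      ≤ |iteratedDeriv (n + 1) f t| * |h| ^ (n + 1) :=
        div_le_self (by positivity) (by exact_mod_cast (n + 1).factorial_pos)
    _ ≤ K * |h| ^ (n + 1) := by gcongr; exact hK t

variable {E : Type*} [NormedAddCommGroup E] [NormedSpace ℝ E] {f : ℝ → E} {c : ℝ} {n : ℕ}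

theorem hasDerivAt_iteratedDeriv (hf : ContDiff ℝ (n + 1) f) (t : ℝ) :
    HasDerivAt (iteratedDeriv n f) (iteratedDeriv (n + 1) f t) t := by
  rw [iteratedDeriv_succ]
  exact (hf.differentiable_iteratedDeriv' n t).hasDerivAt

theorem periodic_iteratedDeriv (hper : Function.Periodic f c) (n : ℕ) :
    Function.Periodic (iteratedDeriv n f) c := fun t ↦ by
  have hshift := congrFun (iteratedDeriv_comp_add_const (𝕜 := ℝ) n f c) t
  rwa [show (fun z ↦ f (z + c)) = f from funext hper, eq_comm] at hshift

theorem periodic_deriv (hper : Function.Periodic f c) : Function.Periodic (deriv f) c := by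
  simpa only [iteratedDeriv_one] using periodic_iteratedDeriv hper 1

theorem exists_norm_iteratedDeriv_le (hf : ContDiff ℝ n f) (hper : Function.Periodic f c)
    (hc : c ≠ 0) : ∃ K ≥ 0, ∀ t, ‖iteratedDeriv n f t‖ ≤ K := by
  obtain ⟨K, hK⟩ := ((periodic_iteratedDeriv hper n).isBounded_of_continuous hc
    (hf.continuous_iteratedDeriv n le_rfl)).exists_norm_le
  exact ⟨K, (norm_nonneg _).trans (hK _ (mem_range_self 0)), fun t ↦ hK _ (mem_range_self t)⟩

end Taylor

section AreaForm

open Set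

@[simp] theorem om_self (u : ℝ × ℝ) : om u u = 0 := by simp only [om]; ring

@[simp] theorem om_zero_left (v : ℝ × ℝ) : om 0 v = 0 := by simp [om]

@[simp] theorem om_zero_right (u : ℝ × ℝ) : om u 0 = 0 := by simp [om]

theorem om_neg_swap (u v : ℝ × ℝ) : -om u v = om v u := by simp only [om]; ring

theorem om_neg_right (u v : ℝ × ℝ) : om u (-v) = -om u v := by
  simp only [om, Prod.fst_neg, Prod.snd_neg]; ring

theorem om_sub_left (u v w : ℝ × ℝ) : om (u - v) w = om u w - om v w := by
  simp only [om, Prod.fst_sub, Prod.snd_sub]; ring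

theorem om_sub_right (u v w : ℝ × ℝ) : om u (v - w) = om u v - om u w := by
  simp only [om, Prod.fst_sub, Prod.snd_sub]; ring

theorem om_smul_left (c : ℝ) (u v : ℝ × ℝ) : om (c • u) v = c * om u v := by
  simp only [om, Prod.smul_fst, Prod.smul_snd, smul_eq_mul]; ring

/-- The area form with its first argument fixed, as a continuous linear functional of the second. -/
noncomputable def omCLM (u : ℝ × ℝ) : ℝ × ℝ →L[ℝ] ℝ :=
  u.1 • ContinuousLinearMap.snd ℝ ℝ ℝ - u.2 • ContinuousLinearMap.fst ℝ ℝ ℝ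

theorem omCLM_apply (u v : ℝ × ℝ) : omCLM u v = om u v := rfl

theorem abs_om_le (u v : ℝ × ℝ) : |om u v| ≤ 2 * (‖u‖ * ‖v‖) := calc
  |om u v| ≤ |u.1 * v.2| + |u.2 * v.1| := abs_sub _ _
  _ = ‖u.1‖ * ‖v.2‖ + ‖u.2‖ * ‖v.1‖ := by simp only [abs_mul, Real.norm_eq_abs]
  _ ≤ ‖u‖ * ‖v‖ + ‖u‖ * ‖v‖ := by
    gcongr <;> first | exact norm_fst_le _ | exact norm_snd_le _
  _ = 2 * (‖u‖ * ‖v‖) := by ring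

theorem continuous_om : Continuous fun p : (ℝ × ℝ) × (ℝ × ℝ) ↦ om p.1 p.2 := by
  unfold om; fun_prop

theorem hasDerivAt_om_const_left (u : ℝ × ℝ) {f : ℝ → ℝ × ℝ} {f' : ℝ × ℝ} {t : ℝ}
    (hf : HasDerivAt f f' t) : HasDerivAt (fun t ↦ om u (f t)) (om u f') t :=
  (omCLM u).hasFDerivAt.comp_hasDerivAt t hf

theorem hasDerivAt_om_const_right (v : ℝ × ℝ) {f : ℝ → ℝ × ℝ} {f' : ℝ × ℝ} {t : ℝ}
    (hf : HasDerivAt f f' t) : HasDerivAt (fun t ↦ om (f t) v) (om f' v) t := by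
  simpa only [om_neg_swap] using (hasDerivAt_om_const_left v hf).fun_neg

theorem hasDerivAt_om {f g : ℝ → ℝ × ℝ} {f' g' : ℝ × ℝ} {t : ℝ} (hf : HasDerivAt f f' t)
    (hg : HasDerivAt g g' t) :
    HasDerivAt (fun t ↦ om (f t) (g t)) (om f' (g t) + om (f t) g') t := by
  have hfst {k : ℝ → ℝ × ℝ} {k' : ℝ × ℝ} (hk : HasDerivAt k k' t) :
      HasDerivAt (fun t ↦ (k t).1) k'.1 t :=
        (ContinuousLinearMap.fst ℝ ℝ ℝ).hasFDerivAt.comp_hasDerivAt t hk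
  have hsnd {k : ℝ → ℝ × ℝ} {k' : ℝ × ℝ} (hk : HasDerivAt k k' t) :
      HasDerivAt (fun t ↦ (k t).2) k'.2 t :=
        (ContinuousLinearMap.snd ℝ ℝ ℝ).hasFDerivAt.comp_hasDerivAt t hk
  exact (((hfst hf).mul (hsnd hg)).sub ((hsnd hf).mul (hfst hg))).congr_deriv
    (by simp only [om]; ring)

theorem iteratedDeriv_om_const_left (u : ℝ × ℝ) {f : ℝ → ℝ × ℝ} {n : ℕ} (hf : ContDiff ℝ n f)
    (t : ℝ) : iteratedDeriv n (fun t ↦ om u (f t)) t = om u (iteratedDeriv n f t) := by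
  rw [iteratedDeriv_eq_iteratedFDeriv, iteratedDeriv_eq_iteratedFDeriv, ← omCLM_apply]
  exact congrArg (· fun _ ↦ 1) ((omCLM u).iteratedFDeriv_comp_left hf.contDiffAt le_rfl)

theorem exists_eq_smul_of_om_eq_zero {u v : ℝ × ℝ} (h : om u v = 0) (hv : v ≠ 0) :
    ∃ c : ℝ, u = c • v := by
  have hnorm : v.1 ^ 2 + v.2 ^ 2 ≠ 0 := fun h₀ ↦ hv <| Prod.ext
    (pow_eq_zero_iff two_ne_zero |>.1 (by linarith [sq_nonneg v.1, sq_nonneg v.2]))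
    (pow_eq_zero_iff two_ne_zero |>.1 (by linarith [sq_nonneg v.1, sq_nonneg v.2]))
  refine ⟨(u.1 * v.1 + u.2 * v.2) / (v.1 ^ 2 + v.2 ^ 2), Prod.ext ?_ ?_⟩ <;>
  · simp only [om] at h
    simp only [Prod.smul_fst, Prod.smul_snd, smul_eq_mul]
    rw [div_mul_eq_mul_div, eq_div_iff hnorm]
    grind

theorem collinear_of_om_eq_zero {P Q R : ℝ × ℝ} (h : om (Q - P) (R - P) = 0) :
    Collinear ℝ {P, Q, R} := by
  rcases eq_or_ne R P with rfl | hRP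
  · simpa [pair_comm] using collinear_pair ℝ Q R
  · obtain ⟨c, hc⟩ := exists_eq_smul_of_om_eq_zero h (sub_ne_zero.2 hRP)
    refine (collinear_iff_of_mem (mem_insert P _)).2 ⟨R - P, ?_⟩
    rintro p (rfl | rfl | rfl)
    exacts [⟨0, by simp⟩, ⟨c, by simp [← hc]⟩, ⟨1, by simp⟩]

end AreaForm

section StrictConvexity

variable {E : Type*} [AddCommGroup E] [Module ℝ E] [TopologicalSpace E] {C : Set E} {P Q R : E}

theorem mem_interior_of_sbtw (hC : StrictConvex ℝ C) (hP : P ∈ C) (hR : R ∈ C)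
    (h : Sbtw ℝ P Q R) : Q ∈ interior C :=
  hC.openSegment_subset hP hR h.left_ne_right
    (mem_openSegment_of_ne_left_right h.left_ne h.right_ne h.wbtw.mem_segment)

theorem mem_segment_of_collinear (hC : StrictConvex ℝ C) (hP : P ∈ C) (hQ : Q ∈ C) (hR : R ∈ C)
    (hP' : P ∈ frontier C) (hR' : R ∈ frontier C) (hPR : P ≠ R) (h : Collinear ℝ {P, Q, R}) :
    Q ∈ segment ℝ P R := by
  rcases h.wbtw_or_wbtw_or_wbtw with hPQR | hQRP | hRPQ
  · exact hPQR.mem_segment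
  · rcases eq_or_ne R Q with rfl | hRQ
    · exact right_mem_segment ℝ P R
    · exact absurd (mem_interior_of_sbtw hC hQ hP ⟨hQRP, hRQ, hPR.symm⟩) hR'.2
  · rcases eq_or_ne P Q with rfl | hPQ
    · exact left_mem_segment ℝ P R
    · exact absurd (mem_interior_of_sbtw hC hR hQ ⟨hRPQ, hPR, hPQ⟩) hP'.2

theorem not_collinear_of_mem_frontier (hC : StrictConvex ℝ C) (hcl : IsClosed C)
    (hP : P ∈ frontier C) (hQ : Q ∈ frontier C) (hR : R ∈ frontier C) (hPQ : P ≠ Q) (hQR : Q ≠ R)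
    (hPR : P ≠ R) : ¬Collinear ℝ {P, Q, R} := fun h ↦
  have hsub := hcl.frontier_subset
  have hseg := mem_segment_of_collinear hC (hsub hP) (hsub hQ) (hsub hR) hP hR hPR h
  hQ.2 <| mem_interior_of_sbtw hC (hsub hP) (hsub hR)
    ⟨mem_segment_iff_wbtw.1 hseg, hPQ.symm, hQR⟩

end StrictConvexity

section Cutting

variable {E : Type*} [AddCommGroup E] [Module ℝ E] {W : Set E} {A B p : E} {f : E →ₗ[ℝ] ℝ} {c : ℝ}

theorem segment_subset_union_of_mem {x y z : E} (hz : z ∈ segment ℝ x y) :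
    segment ℝ x y ⊆ segment ℝ x z ∪ segment ℝ z y := by
  rw [segment_eq_image_lineMap] at hz
  intro w hw
  rcases (insert_endpoints_openSegment ℝ x y).symm ▸ hw with rfl | rfl | hw
  · exact .inl (left_mem_segment ℝ w z)
  · exact .inr (right_mem_segment ℝ z w)
  · rcases openSegment_subset_union x y (Set.image_subset_range _ _ hz) hw with rfl | hw | hw
    · exact .inl (right_mem_segment ℝ x w)
    · exact .inl (openSegment_subset_segment ℝ x z hw)
    · exact .inr (openSegment_subset_segment ℝ z y hw)

theorem convexHull_insert_eq_union (hA : A ∈ W) (hB : B ∈ W) (hW : ∀ q ∈ W, f q ≤ c)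
    (hp : c ≤ f p) (hchord : ∀ q ∈ convexHull ℝ (insert p W), f q = c → q ∈ segment ℝ A B) :
    convexHull ℝ (insert p W) = convexHull ℝ W ∪ convexHull ℝ {A, p, B} := by
  refine Set.Subset.antisymm (fun z hz ↦ ?_) (Set.union_subset
    (convexHull_mono (Set.subset_insert p W)) (convexHull_mono ?_))
  · have hpz := hz
    rw [convexHull_insert ⟨A, hA⟩, convexJoin_singleton_left, Set.mem_iUnion₂] at hpz
    obtain ⟨q, hq, hz⟩ := hpz
    have hqc : f q ≤ c := convexHull_min hW (convex_halfSpace_le f.isLinear c) hq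
    have hpI : p ∈ convexHull ℝ (insert p W) := subset_convexHull ℝ _ (Set.mem_insert p W)
    have hqI := convexHull_mono (Set.subset_insert p W) hq
    obtain ⟨m, hm, hmc⟩ : ∃ m ∈ segment ℝ p q, f m = c := by
      have himage : f '' segment ℝ p q = segment ℝ (f p) (f q) := image_segment ℝ f.toAffineMap p q
      rw [segment_symm ℝ (f p), segment_eq_Icc (hqc.trans hp)] at himage
      exact himage.ge ⟨hqc, hp⟩
    have hmAB := hchord m ((convex_convexHull ℝ _).segment_subset hpI hqI hm) hmc
    have segment_subset {S : Set E} (hAS : A ∈ S) (hBS : B ∈ S) :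
        segment ℝ A B ⊆ convexHull ℝ S := segment_subset_convexHull hAS hBS
    rcases segment_subset_union_of_mem hm hz with hz | hz
    · exact .inr <| (convex_convexHull ℝ _).segment_subset (subset_convexHull ℝ _ (by simp))
        (segment_subset (by simp) (by simp) hmAB) hz
    · exact .inl <| (convex_convexHull ℝ W).segment_subset (segment_subset hA hB hmAB) hq hz
  · rintro q (rfl | rfl | rfl) <;> simp [hA, hB]

theorem convexHull_inter_triangle_subset_segment (hA : A ∈ W) (hB : B ∈ W) (hW : ∀ q ∈ W, f q ≤ c)
    (hAc : f A = c) (hBc : f B = c) (hp : c ≤ f p)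
    (hchord : ∀ q ∈ convexHull ℝ (insert p W), f q = c → q ∈ segment ℝ A B) :
    convexHull ℝ W ∩ convexHull ℝ {A, p, B} ⊆ segment ℝ A B := by
  rintro q ⟨hqW, hqT⟩
  refine hchord q (convexHull_mono (Set.subset_insert p W) hqW) (le_antisymm ?_ ?_)
  · exact convexHull_min hW (convex_halfSpace_le f.isLinear c) hqW
  · refine convexHull_min ?_ (convex_halfSpace_ge f.isLinear c) hqT
    rintro q (rfl | rfl | rfl)
    exacts [hAc.ge, hp, hBc.ge]

end Cutting

section TriangleArea

open Set
open scoped Pointwise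

theorem convexHull_zero_basis_eq :
    convexHull ℝ ({0, (1, 0), (0, 1)} : Set (ℝ × ℝ)) = {p | 0 ≤ p.1 ∧ 0 ≤ p.2 ∧ p.2 ≤ 1 - p.1} := by
  refine Subset.antisymm (convexHull_min ?_ ?_) fun p ⟨hp₁, hp₂, hp⟩ ↦ ?_
  · rintro p (rfl | rfl | rfl) <;> norm_num
  · have hconv : Convex ℝ {p : ℝ × ℝ | p.2 ≤ 1 - p.1} := by
      simpa only [le_sub_iff_add_le, LinearMap.add_apply, LinearMap.fst_apply,
        LinearMap.snd_apply] using
        convex_halfSpace_le (LinearMap.snd ℝ ℝ ℝ + LinearMap.fst ℝ ℝ ℝ).isLinear 1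
    exact (convex_halfSpace_ge (LinearMap.fst ℝ ℝ ℝ).isLinear 0).inter
      ((convex_halfSpace_ge (LinearMap.snd ℝ ℝ ℝ).isLinear 0).inter hconv)
  · have hsum := (convex_convexHull ℝ ({0, (1, 0), (0, 1)} : Set (ℝ × ℝ))).sum_mem
      (t := Finset.univ) (w := ![1 - p.1 - p.2, p.1, p.2]) (z := ![0, (1, 0), (0, 1)])
      (by simp [Fin.forall_fin_succ]; grind) (by simp [Fin.sum_univ_three]; ring)
      fun i _ ↦ subset_convexHull ℝ _ (by fin_cases i <;> simp)
    simpa [Fin.sum_univ_three] using hsum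

theorem volume_real_convexHull_zero_basis :
    volume.real (convexHull ℝ ({0, (1, 0), (0, 1)} : Set (ℝ × ℝ))) = 1 / 2 := by
  have hmeas : MeasurableSet (convexHull ℝ ({0, (1, 0), (0, 1)} : Set (ℝ × ℝ))) :=
    ((toFinite _).isClosed_convexHull ℝ).measurableSet
  have hslice (a : ℝ) : volume (Prod.mk a ⁻¹' convexHull ℝ ({0, (1, 0), (0, 1)} : Set (ℝ × ℝ))) =
      (Icc 0 1).indicator (fun a ↦ ENNReal.ofReal (1 - a)) a := by
    rw [convexHull_zero_basis_eq]
    rcases lt_or_ge a 0 with ha | ha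
    · simp [ha.not_ge]
    · rw [show Prod.mk a ⁻¹' {p : ℝ × ℝ | 0 ≤ p.1 ∧ 0 ≤ p.2 ∧ p.2 ≤ 1 - p.1} = Icc 0 (1 - a) by
        ext b; simp [ha], Real.volume_Icc, sub_zero]
      by_cases ha₁ : a ≤ 1 <;> simp [indicator, ha, ha₁]; linarith
  have hnonneg : ∀ᵐ a ∂volume.restrict (Icc (0 : ℝ) 1), 0 ≤ 1 - a :=
    (ae_restrict_mem measurableSet_Icc).mono fun a ha ↦ sub_nonneg.2 ha.2
  rw [measureReal_def, Measure.volume_eq_prod, Measure.prod_apply hmeas, lintegral_congr hslice,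
    lintegral_indicator measurableSet_Icc, ← ofReal_integral_eq_lintegral_ofReal
    (by fun_prop : Continuous fun a : ℝ ↦ 1 - a).integrableOn_Icc hnonneg,
    integral_Icc_eq_integral_Ioc, ← intervalIntegral.integral_of_le zero_le_one]
  simp only [intervalIntegral.integral_comp_sub_left fun a : ℝ ↦ a, sub_self, sub_zero, integral_id]
  norm_num

theorem volume_real_triangle (A p B : ℝ × ℝ) :
    volume.real (convexHull ℝ {A, p, B}) = |om (p - A) (B - A)| / 2 := by
  set L : (ℝ × ℝ) →ₗ[ℝ] (ℝ × ℝ) := Matrix.toLin (.finTwoProd ℝ) (.finTwoProd ℝ)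
    !![(p - A).1, (B - A).1; (p - A).2, (B - A).2] with hL
  have hfst : L (1, 0) = p - A := by
    simp only [hL, Matrix.toLin_finTwoProd_apply, mul_one, mul_zero, add_zero]
  have hsnd : L (0, 1) = B - A := by
    simp only [hL, Matrix.toLin_finTwoProd_apply, mul_one, mul_zero, zero_add]
  have himage : convexHull ℝ {A, p, B} = A +ᵥ L '' convexHull ℝ {0, (1, 0), (0, 1)} := by
    rw [L.image_convexHull, ← convexHull_vadd]
    simp [image_insert_eq, hfst, hsnd, ← image_vadd]
  have hdet : L.det = om (p - A) (B - A) := by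
    simp only [hL, LinearMap.det_toLin, Matrix.det_fin_two_of, om]
    ring
  rw [himage, measureReal_def, measure_vadd, Measure.addHaar_image_linearMap, ENNReal.toReal_mul,
    ENNReal.toReal_ofReal (abs_nonneg _), hdet, ← measureReal_def,
    volume_real_convexHull_zero_basis, mul_one_div]

theorem volume_segment (A B : ℝ × ℝ) : volume (segment ℝ A B) = 0 := by
  have hzero := volume_real_triangle A A B
  rw [insert_eq_of_mem (mem_insert A _), convexHull_pair, sub_self, om_zero_left, abs_zero,
    zero_div] at hzero
  refine (measureReal_eq_zero_iff ?_).1 hzero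
  rw [← convexHull_pair]
  exact ((toFinite _).isCompact_convexHull ℝ).measure_ne_top

theorem volume_real_convexHull_insert {W : Set (ℝ × ℝ)} {A B p : ℝ × ℝ} (hfin : W.Finite)
    (hA : A ∈ W) (hB : B ∈ W) (hW : ∀ q ∈ W, om (q - A) (B - A) ≤ 0)
    (hp : 0 ≤ om (p - A) (B - A))
    (hchord : ∀ q ∈ convexHull ℝ (insert p W), om (q - A) (B - A) = 0 → q ∈ segment ℝ A B) :
    volume.real (convexHull ℝ (insert p W)) =
      volume.real (convexHull ℝ W) + om (p - A) (B - A) / 2 := by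
  have hside (q : ℝ × ℝ) : om (q - A) (B - A) = omCLM (A - B) q - omCLM (A - B) A := by
    simp only [omCLM_apply, om, Prod.fst_sub, Prod.snd_sub]; ring
  simp only [hside, sub_nonpos, sub_nonneg, sub_eq_zero] at hW hp hchord
  have hBA : omCLM (A - B) B = omCLM (A - B) A := by
    rw [← sub_eq_zero, ← hside, om_self]
  have hdisj : AEDisjoint volume (convexHull ℝ W) (convexHull ℝ {A, p, B}) :=
    measure_mono_null (convexHull_inter_triangle_subset_segment (f := (omCLM (A - B)).toLinearMap)
      hA hB hW rfl hBA hp hchord) (volume_segment A B)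
  have htri : ({A, p, B} : Set (ℝ × ℝ)).Finite := toFinite _
  rw [convexHull_insert_eq_union (f := (omCLM (A - B)).toLinearMap) hA hB hW hp hchord,
    measureReal_union₀ (htri.isClosed_convexHull ℝ).measurableSet.nullMeasurableSet hdisj
      (hfin.isCompact_convexHull ℝ).measure_ne_top (htri.isCompact_convexHull ℝ).measure_ne_top,
    volume_real_triangle, hside, abs_of_nonneg (sub_nonneg.2 hp)]

end TriangleArea

section AffineCurve

open Set
open scoped Nat

theorem exists_abs_om_sub_taylor_le {v y : ℝ → ℝ × ℝ} {c : ℝ} {n : ℕ} (hv : Continuous v)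
    (hvper : Function.Periodic v c) (hy : ContDiff ℝ (n + 1) y) (hyper : Function.Periodic y c)
    (hc : c ≠ 0) : ∃ K > 0, ∀ s h,
      |om (v s) (y (s + h)) -
        ∑ k ∈ Finset.range (n + 1), om (v s) (iteratedDeriv k y s) * h ^ k / k !| ≤
          K * |h| ^ (n + 1) := by
  obtain ⟨V, hV₀, hV⟩ := exists_norm_iteratedDeriv_le (n := 0) (contDiff_zero.2 hv) hvper hc
  obtain ⟨Y, hY₀, hY⟩ := exists_norm_iteratedDeriv_le (n := n + 1) (mod_cast hy) hyper hc
  simp only [iteratedDeriv_zero] at hV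
  refine ⟨2 * (V * Y) + 1, by positivity, fun s h ↦ ?_⟩
  have hsmooth : ContDiff ℝ (n + 1) fun t ↦ om (v s) (y t) := (omCLM (v s)).contDiff.comp hy
  have hbound (t : ℝ) : |iteratedDeriv (n + 1) (fun t ↦ om (v s) (y t)) t| ≤ 2 * (V * Y) + 1 := by
    rw [iteratedDeriv_om_const_left (v s) (mod_cast hy)]
    calc |om (v s) (iteratedDeriv (n + 1) y t)|
        ≤ 2 * (‖v s‖ * ‖iteratedDeriv (n + 1) y t‖) := abs_om_le _ _
      _ ≤ 2 * (V * Y) := by gcongr; exacts [hV s, hY t]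
      _ ≤ 2 * (V * Y) + 1 := by linarith
  have hsum : ∑ k ∈ Finset.range (n + 1), om (v s) (iteratedDeriv k y s) * h ^ k / k ! =
      ∑ k ∈ Finset.range (n + 1), iteratedDeriv k (fun t ↦ om (v s) (y t)) s * h ^ k / k ! :=
    Finset.sum_congr rfl fun k hk ↦ by
      rw [iteratedDeriv_om_const_left (v s)
        (hy.of_le (by exact_mod_cast (Finset.mem_range.1 hk).le))]
  rw [hsum]
  exact abs_sub_taylor_le hsmooth hbound s h

/-- The curve `x` is parametrized by affine arc length. -/
def IsAffineArclength (x : ℝ → ℝ × ℝ) : Prop :=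
  ∀ t, om (deriv x t) (iteratedDeriv 2 x t) = 1

/-- The affine curvature of a curve parametrized by affine arc length. -/
noncomputable def affineCurvature (x : ℝ → ℝ × ℝ) (t : ℝ) : ℝ :=
  om (iteratedDeriv 2 x t) (iteratedDeriv 3 x t)

/-- The height of `x (s + h)` above the tangent line at `x s`, in units in which the tangent
vector `x' s` has length `1`. -/
noncomputable def tangentHeight (x : ℝ → ℝ × ℝ) (s h : ℝ) : ℝ :=
  om (deriv x s) (x (s + h) - x s)

variable {x : ℝ → ℝ × ℝ} {c : ℝ}

theorem exists_abs_affineCurvature_le (hx : ContDiff ℝ 3 x) (hper : Function.Periodic x c)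
    (hc : c ≠ 0) : ∃ K, ∀ t, |affineCurvature x t| ≤ K := by
  obtain ⟨K₂, hK₂₀, hK₂⟩ := exists_norm_iteratedDeriv_le (n := 2) (hx.of_le (by norm_num)) hper hc
  obtain ⟨K₃, -, hK₃⟩ := exists_norm_iteratedDeriv_le (n := 3) hx hper hc
  refine ⟨2 * (K₂ * K₃), fun t ↦ (abs_om_le _ _).trans ?_⟩
  gcongr
  exacts [hK₂ t, hK₃ t]

namespace IsAffineArclength

theorem deriv_ne_zero (haff : IsAffineArclength x) (s : ℝ) : deriv x s ≠ 0 := fun h ↦ by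
  simpa [h] using haff s

theorem om_deriv_iteratedDeriv_three (haff : IsAffineArclength x) (hx : ContDiff ℝ 3 x) (t : ℝ) :
    om (deriv x t) (iteratedDeriv 3 x t) = 0 := by
  have h₁ := hasDerivAt_iteratedDeriv (n := 1) (f := x) (hx.of_le (by norm_num)) t
  have h₂ := hasDerivAt_iteratedDeriv (n := 2) (f := x) (hx.of_le (by norm_num)) t
  rw [iteratedDeriv_one] at h₁
  have hconst : (fun t ↦ om (deriv x t) (iteratedDeriv 2 x t)) = fun _ ↦ 1 := funext haff
  have huniq := (hconst ▸ hasDerivAt_om h₁ h₂).unique (hasDerivAt_const t 1)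
  simpa using huniq

theorem om_deriv_iteratedDeriv_four (haff : IsAffineArclength x) (hx : ContDiff ℝ 4 x) (t : ℝ) :
    om (deriv x t) (iteratedDeriv 4 x t) = -affineCurvature x t := by
  have h₁ := hasDerivAt_iteratedDeriv (n := 1) (f := x) (hx.of_le (by norm_num)) t
  have h₃ := hasDerivAt_iteratedDeriv (n := 3) (f := x) (hx.of_le (by norm_num)) t
  rw [iteratedDeriv_one] at h₁
  have hconst : (fun t ↦ om (deriv x t) (iteratedDeriv 3 x t)) = fun _ ↦ 0 :=
    funext (haff.om_deriv_iteratedDeriv_three (hx.of_le (by norm_num)))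
  have huniq := (hconst ▸ hasDerivAt_om h₁ h₃).unique (hasDerivAt_const t 0)
  exact eq_neg_of_add_eq_zero_right huniq

theorem exists_abs_tangentHeight_sub_le (haff : IsAffineArclength x) (hx : ContDiff ℝ 5 x)
    (hper : Function.Periodic x c) (hc : c ≠ 0) : ∃ K > 0, ∀ s h,
      |tangentHeight x s h - (h ^ 2 / 2 - affineCurvature x s * h ^ 4 / 24)| ≤ K * |h| ^ 5 := by
  obtain ⟨K, hK₀, hK⟩ := exists_abs_om_sub_taylor_le (n := 4)
    (hx.continuous_deriv (by norm_num)) (periodic_deriv hper) (hx.of_le (by norm_num)) hper hc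
  refine ⟨K, hK₀, fun s h ↦ ?_⟩
  convert hK s h using 2
  simp only [Finset.sum_range_succ, Finset.sum_range_zero, iteratedDeriv_zero, iteratedDeriv_one,
    haff s, haff.om_deriv_iteratedDeriv_three (hx.of_le (by norm_num)),
    haff.om_deriv_iteratedDeriv_four (hx.of_le (by norm_num)), om_self, tangentHeight, om_sub_right,
    Nat.factorial]
  push_cast
  ring

end IsAffineArclength

@[simp] theorem tangentHeight_zero (s : ℝ) : tangentHeight x s 0 = 0 := by
  simp [tangentHeight]

theorem hasDerivAt_tangentHeight (hx : Differentiable ℝ x) (s h : ℝ) :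
    HasDerivAt (tangentHeight x s) (om (deriv x s) (deriv x (s + h))) h :=
  hasDerivAt_om_const_left _ (((hx (s + h)).hasDerivAt.comp_const_add s h).sub_const _)

theorem continuous_tangentHeight (hx : ContDiff ℝ 1 x) :
    Continuous fun p : ℝ × ℝ ↦ tangentHeight x p.1 p.2 := by
  have hx₀ := hx.continuous
  exact continuous_om.comp (((hx.continuous_deriv le_rfl).comp continuous_fst).prodMk
    (by fun_prop : Continuous fun p : ℝ × ℝ ↦ x (p.1 + p.2) - x p.1))

theorem IsAffineArclength.exists_strictMonoOn_tangentHeight (haff : IsAffineArclength x)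
    (hx : ContDiff ℝ 3 x) (hper : Function.Periodic x c) (hc : c ≠ 0) :
    ∃ ε > 0, ∀ s, StrictMonoOn (tangentHeight x s) (Icc 0 ε) ∧
      StrictAntiOn (tangentHeight x s) (Icc (-ε) 0) := by
  have hdx : ContDiff ℝ 2 (deriv x) := hx.deriv'
  have hdiff : Differentiable ℝ x := hx.differentiable (by norm_num)
  obtain ⟨K, hK₀, hK⟩ := exists_abs_om_sub_taylor_le (n := 1) hdx.continuous
    (periodic_deriv hper) hdx (periodic_deriv hper) hc
  have hslope (s h : ℝ) : |om (deriv x s) (deriv x (s + h)) - h| ≤ K * |h| ^ 2 := by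
    simpa [Finset.sum_range_succ, ← iteratedDeriv_succ', haff s] using hK s h
  have hcont (s : ℝ) (D : Set ℝ) : ContinuousOn (tangentHeight x s) D := fun h _ ↦
    (hasDerivAt_tangentHeight hdiff s h).continuousAt.continuousWithinAt
  refine ⟨1 / K, by positivity, fun s ↦ ⟨strictMonoOn_of_deriv_pos (convex_Icc _ _) (hcont s _)
    fun h hh ↦ ?_, strictAntiOn_of_deriv_neg (convex_Icc _ _) (hcont s _) fun h hh ↦ ?_⟩⟩ <;>
  · rw [interior_Icc, mem_Ioo] at hh
    rw [(hasDerivAt_tangentHeight hdiff s h).deriv]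
    have hK' := abs_le.1 (hslope s h)
    rw [sq_abs] at hK'
    have : K * (1 / K) = 1 := mul_one_div_cancel hK₀.ne'
    nlinarith

end AffineCurve

section Orientation

open Set

variable {x : ℝ → ℝ × ℝ} {c : ℝ}

/-- The closed curve `x` of period `c` is convex and traversed counterclockwise: any three of its
points met in this order within one period span a positively oriented triangle. -/
def IsCounterclockwise (x : ℝ → ℝ × ℝ) (c : ℝ) : Prop :=
  ∀ ⦃s t u⦄, s < t → t < u → u < s + c → 0 < om (x t - x s) (x u - x s)

theorem om_chords_ne_zero {C : Set (ℝ × ℝ)} (hC : StrictConvex ℝ C) (hcl : IsClosed C)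
    (hfr : ∀ t, x t ∈ frontier C) (hper : Function.Periodic x c) (hinj : InjOn x (Ico 0 c))
    {s t u : ℝ} (hst : s < t) (htu : t < u) (hus : u < s + c) :
    om (x t - x s) (x u - x s) ≠ 0 := fun h ↦ by
  have hinj_s : InjOn x (Ico s (s + c)) :=
    injOn_Ico_of_periodic hper (by linarith) (by rwa [zero_add]) s
  have hs : s ∈ Ico s (s + c) := ⟨le_rfl, by linarith⟩
  have ht : t ∈ Ico s (s + c) := ⟨hst.le, by linarith⟩
  have hu : u ∈ Ico s (s + c) := ⟨by linarith, hus⟩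
  exact not_collinear_of_mem_frontier hC hcl (hfr s) (hfr t) (hfr u) (hinj_s.ne hs ht hst.ne)
    (hinj_s.ne ht hu htu.ne) (hinj_s.ne hs hu (hst.trans htu).ne) (collinear_of_om_eq_zero h)

theorem isCounterclockwise_or_om_chords_neg (hx : Continuous x)
    (hne : ∀ ⦃s t u⦄, s < t → t < u → u < s + c → om (x t - x s) (x u - x s) ≠ 0) :
    IsCounterclockwise x c ∨
      ∀ ⦃s t u⦄, s < t → t < u → u < s + c → om (x t - x s) (x u - x s) < 0 := by
  let U : Set (ℝ × ℝ × ℝ) := {p | p.1 < p.2.1} ∩ {p | p.2.1 < p.2.2} ∩ {p | p.2.2 < p.1 + c}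
  let G : ℝ × ℝ × ℝ → ℝ := fun p ↦ om (x p.2.1 - x p.1) (x p.2.2 - x p.1)
  have hU : IsPreconnected U := by
    refine (convex_iff_forall_pos.2 ?_).isPreconnected
    rintro p ⟨⟨hp₁, hp₂⟩, hp₃⟩ q ⟨⟨hq₁, hq₂⟩, hq₃⟩ a b ha hb hab
    simp only [mem_ofPred_eq] at hp₁ hp₂ hp₃ hq₁ hq₂ hq₃
    simp only [U, mem_inter_iff, mem_ofPred_eq, Prod.fst_add, Prod.snd_add, Prod.smul_fst,
      Prod.smul_snd, smul_eq_mul]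
    have hc : a * c + b * c = c := by rw [← add_mul, hab, one_mul]
    refine ⟨⟨?_, ?_⟩, ?_⟩ <;> nlinarith
  have hG : Continuous G := continuous_om.comp (by fun_prop :
    Continuous fun p : ℝ × ℝ × ℝ ↦ (x p.2.1 - x p.1, x p.2.2 - x p.1))
  by_contra! h
  simp only [IsCounterclockwise, not_forall, not_lt] at h
  obtain ⟨⟨s, t, u, hst, htu, hus, hneg⟩, s', t', u', hst', htu', hus', hpos⟩ := h
  obtain ⟨⟨s, t, u⟩, ⟨⟨hst, htu⟩, hus⟩, hzero⟩ := hU.intermediate_value (a := (s, t, u))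
    (b := (s', t', u')) ⟨⟨hst, htu⟩, hus⟩ ⟨⟨hst', htu'⟩, hus'⟩ hG.continuousOn ⟨hneg, hpos⟩
  exact hne hst htu hus hzero

theorem om_nonneg_of_hasDerivAt {v w : ℝ × ℝ} {s u : ℝ} (hx : HasDerivAt x v s) (hsu : s < u)
    (h : ∀ t ∈ Ioo s u, 0 ≤ om (x t - x s) w) : 0 ≤ om v w := by
  have hslope := (hasDerivAt_iff_tendsto_slope.1 (hasDerivAt_om_const_right w hx)).mono_left
    (nhdsGT_le_nhdsNE s)
  refine ge_of_tendsto hslope ?_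
  filter_upwards [Ioo_mem_nhdsGT hsu] with t ht
  rw [slope_def_field, ← om_sub_left]
  exact div_nonneg (h t ht) (sub_nonneg.2 ht.1.le)

theorem IsAffineArclength.isCounterclockwise (haff : IsAffineArclength x) (hx : ContDiff ℝ 3 x)
    (hper : Function.Periodic x c) (hc : 0 < c) (hinj : InjOn x (Ico 0 c)) {C : Set (ℝ × ℝ)}
    (hC : StrictConvex ℝ C) (hcl : IsClosed C) (hfr : ∀ t, x t ∈ frontier C) :
    IsCounterclockwise x c := by
  refine (isCounterclockwise_or_om_chords_neg hx.continuous
    fun _ _ _ ↦ om_chords_ne_zero hC hcl hfr hper hinj).resolve_right fun hneg ↦ ?_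
  obtain ⟨ε, hε, hmono⟩ := haff.exists_strictMonoOn_tangentHeight hx hper hc.ne'
  set h := min ε (c / 2)
  have hh : 0 < h := by positivity
  have hhc : h < c := (min_le_right _ _).trans_lt (half_lt_self hc)
  have hpos : 0 < tangentHeight x 0 h := by
    simpa using (hmono 0).1 ⟨le_rfl, hε.le⟩ ⟨hh.le, min_le_left _ _⟩ hh
  have hnonpos := om_nonneg_of_hasDerivAt (w := -(x (0 + h) - x 0))
    (hx.differentiable (by norm_num) 0).hasDerivAt hh fun t ht ↦ by
      rw [om_neg_right, neg_nonneg]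
      exact (hneg ht.1 (by simpa using ht.2) (by simpa using hhc)).le
  rw [om_neg_right, neg_nonneg] at hnonpos
  exact hpos.not_ge hnonpos

theorem IsCounterclockwise.tangentHeight_nonneg (hccw : IsCounterclockwise x c)
    (hx : Differentiable ℝ x) (s : ℝ) {h : ℝ} (h₀ : 0 < h) (hc : h < c) :
    0 ≤ tangentHeight x s h :=
  om_nonneg_of_hasDerivAt (hx s).hasDerivAt (lt_add_of_pos_right s h₀)
    fun _ ht ↦ (hccw ht.1 ht.2 (by linarith)).le

theorem IsCounterclockwise.tangentHeight_pos (hccw : IsCounterclockwise x c)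
    (hx : Differentiable ℝ x) {s h : ℝ} (hs : deriv x s ≠ 0) (h₀ : 0 < h) (hc : h < c) :
    0 < tangentHeight x s h := by
  refine (hccw.tangentHeight_nonneg hx s h₀ hc).lt_of_ne fun hzero ↦ ?_
  obtain ⟨κ, hκ⟩ := exists_eq_smul_of_om_eq_zero (u := x (s + h) - x s) (v := deriv x s)
    (by rw [← om_neg_swap, neg_eq_zero]; exact hzero.symm) hs
  have hbefore := hccw (s := s) (t := s + h / 2) (u := s + h) (by linarith) (by linarith)
    (by linarith)
  have hafter := hccw (s := s) (t := s + h) (u := s + (h + c) / 2) (by linarith) (by linarith)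
    (by linarith)
  rw [hκ, ← om_neg_swap, om_smul_left, neg_pos] at hbefore
  rw [hκ, om_smul_left] at hafter
  have hneg : κ < 0 := neg_of_mul_neg_left hbefore
    (hccw.tangentHeight_nonneg hx s (by linarith) (by linarith))
  have hpos : 0 < κ := pos_of_mul_pos_left hafter
    (hccw.tangentHeight_nonneg hx s (by linarith) (by linarith))
  exact hneg.not_gt hpos

end Orientation

section NearbyChords

open Set

theorem exists_pos_forall_le_of_periodic {β : Type*} [TopologicalSpace β] {F : ℝ → β → ℝ} {c : ℝ}
    {S : Set β} (hF : Continuous fun p : ℝ × β ↦ F p.1 p.2) (hper : Function.Periodic F c)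
    (hc : 0 < c) (hS : IsCompact S) (hpos : ∀ s, ∀ y ∈ S, 0 < F s y) :
    ∃ m > 0, ∀ s, ∀ y ∈ S, m ≤ F s y := by
  obtain ⟨m, hm, hle⟩ := (isCompact_Icc.prod hS).exists_forall_le' (s := Icc 0 c ×ˢ S)
    hF.continuousOn fun p hp ↦ hpos p.1 p.2 hp.2
  refine ⟨m, hm, fun s y hy ↦ ?_⟩
  obtain ⟨t, ht, hst⟩ := hper.exists_mem_Ico₀ hc s
  rw [hst]
  exact hle (t, y) ⟨Ico_subset_Icc_self ht, hy⟩

variable {x : ℝ → ℝ × ℝ} {c : ℝ}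

theorem periodic_tangentHeight_left (hper : Function.Periodic x c) :
    Function.Periodic (tangentHeight x) c := fun s ↦ funext fun h ↦ by
  simp only [tangentHeight, periodic_deriv hper s, add_right_comm s c h, hper _]

theorem periodic_tangentHeight_right (hper : Function.Periodic x c) (s : ℝ) :
    Function.Periodic (tangentHeight x s) c := fun h ↦ by
  simp only [tangentHeight, ← add_assoc, hper _]

theorem exists_abs_tangentHeight_le (hx : ContDiff ℝ 1 x) (hper : Function.Periodic x c)
    (hc : c ≠ 0) : ∃ K > 0, ∀ s h, |tangentHeight x s h| ≤ K * |h| := by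
  obtain ⟨K, hK₀, hK⟩ := exists_abs_om_sub_taylor_le (n := 0) (hx.continuous_deriv le_rfl)
    (periodic_deriv hper) (by simpa using hx) hper hc
  exact ⟨K, hK₀, fun s h ↦ by simpa [tangentHeight, om_sub_right] using hK s h⟩

theorem IsAffineArclength.exists_forall_lt_of_tangentHeight_eq (haff : IsAffineArclength x)
    (hx : ContDiff ℝ 3 x) (hper : Function.Periodic x c) (hc : 0 < c)
    (hpos : ∀ s h, 0 < h → h < c → 0 < tangentHeight x s h) {ε : ℝ} (hε : 0 < ε) :
    ∃ δ > 0, ∀ s a b, 0 < b → b < δ → a + b < c →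
      tangentHeight x s a = tangentHeight x s (-b) → a < ε := by
  obtain ⟨ε', hε', hmono⟩ := haff.exists_strictMonoOn_tangentHeight hx hper hc.ne'
  have hx₁ : ContDiff ℝ 1 x := hx.of_le (by norm_num)
  set r := min ε ε'
  have hr : 0 < r := by positivity
  obtain ⟨K, hK₀, hK⟩ := exists_abs_tangentHeight_le hx₁ hper hc.ne'
  obtain ⟨m, hm, hle⟩ := exists_pos_forall_le_of_periodic (continuous_tangentHeight hx₁)
    (periodic_tangentHeight_left hper) hc (isCompact_Icc (a := r) (b := c - r))
    fun s h hh ↦ hpos s h (by linarith [hh.1]) (by linarith [hh.2])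
  refine ⟨min ε' (m / K), by positivity, fun s a b hb hbδ hab heq ↦ ?_⟩
  obtain ⟨hbε, hbm⟩ := lt_min_iff.1 hbδ
  have hsmall : tangentHeight x s (-b) < m := calc
    tangentHeight x s (-b) ≤ K * |-b| := (le_abs_self _).trans (hK s _)
    _ = b * K := by rw [abs_neg, abs_of_pos hb, mul_comm]
    _ < m := (lt_div_iff₀ hK₀).1 hbm
  by_contra! ha
  have hra : r ≤ a := (min_le_left _ _).trans ha
  rcases le_or_gt a (c - r) with har | har
  · linarith [hle s a ⟨hra, har⟩]
  · have hwrap : tangentHeight x s (a - c) = tangentHeight x s (-b) := by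
      rw [(periodic_tangentHeight_right hper s).sub_eq, heq]
    have hrε : r ≤ ε' := min_le_right _ _
    have hac := (hmono s).2.injOn ⟨by linarith, by linarith⟩
      ⟨neg_le_neg hbε.le, neg_nonpos.2 hb.le⟩ hwrap
    linarith

theorem abs_sub_mul_le_of_quartic_approx {a b y κ K : ℝ} (ha : 0 < a) (hb : 0 < b) (hK : 0 ≤ K)
    (hya : |y - (a ^ 2 / 2 - κ * a ^ 4 / 24)| ≤ K * a ^ 5)
    (hyb : |y - (b ^ 2 / 2 - κ * b ^ 4 / 24)| ≤ K * b ^ 5) :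
    |a - b| * |1 / 2 - κ * (a ^ 2 + b ^ 2) / 24| ≤ K * (a ^ 4 + b ^ 4) := by
  have hab : 0 < a + b := add_pos ha hb
  refine le_of_mul_le_mul_right ?_ hab
  calc |a - b| * |1 / 2 - κ * (a ^ 2 + b ^ 2) / 24| * (a + b)
      = |(a - b) * (1 / 2 - κ * (a ^ 2 + b ^ 2) / 24) * (a + b)| := by
        rw [abs_mul, abs_mul, abs_of_pos hab]
    _ = |(a ^ 2 / 2 - κ * a ^ 4 / 24) - (b ^ 2 / 2 - κ * b ^ 4 / 24)| := by ring_nf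
    _ ≤ K * a ^ 5 + K * b ^ 5 :=
      (abs_sub_le _ y _).trans (add_le_add (abs_sub_comm y _ ▸ hya) hyb)
    _ ≤ K * (a ^ 4 + b ^ 4) * (a + b) := by
      have : 0 ≤ K * (a ^ 4 * b + b ^ 4 * a) := by positivity
      linarith

theorem abs_sub_le_of_quartic_approx {a b y κ K : ℝ} (ha : 0 < a) (hb : 0 < b) (ha₁ : a ≤ 1)
    (hb₁ : b ≤ 1) (hKa : K * a ≤ 1 / 16) (hKb : K * b ≤ 1 / 16) (hκ : |κ| ≤ K)
    (hya : |y - (a ^ 2 / 2 - κ * a ^ 4 / 24)| ≤ K * a ^ 5)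
    (hyb : |y - (b ^ 2 / 2 - κ * b ^ 4 / 24)| ≤ K * b ^ 5) : |a - b| ≤ 68 * K * b ^ 4 := by
  have hK : 0 ≤ K := (abs_nonneg κ).trans hκ
  have hcoef : 1 / 4 ≤ |1 / 2 - κ * (a ^ 2 + b ^ 2) / 24| := by
    have hKa₂ : K * a ^ 2 ≤ 1 / 16 := by nlinarith
    have hKb₂ : K * b ^ 2 ≤ 1 / 16 := by nlinarith
    have : κ * (a ^ 2 + b ^ 2) ≤ K * (a ^ 2 + b ^ 2) := by gcongr; exact (abs_le.1 hκ).2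
    exact le_abs.2 (.inl (by linarith))
  have hab : |a - b| ≤ 4 * K * (a ^ 4 + b ^ 4) := by
    have := abs_sub_mul_le_of_quartic_approx ha hb hK hya hyb
    have := mul_le_mul_of_nonneg_left hcoef (abs_nonneg (a - b))
    linarith
  have hquartic (t : ℝ) (ht : 0 < t) (ht₁ : t ≤ 1) (hKt : K * t ≤ 1 / 16) :
      4 * K * t ^ 4 ≤ t / 4 := by
    have hsq : t ^ 2 ≤ 1 := pow_le_one₀ ht.le ht₁
    calc 4 * K * t ^ 4 = 4 * (K * t) * t ^ 2 * t := by ring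
      _ ≤ 4 * (1 / 16) * 1 * t := by gcongr
      _ = t / 4 := by ring
  have ha₂ : a ≤ 2 * b := by
    linarith [(abs_le.1 hab).2, hquartic a ha ha₁ hKa, hquartic b hb hb₁ hKb]
  calc |a - b| ≤ 4 * K * (a ^ 4 + b ^ 4) := hab
    _ ≤ 4 * K * ((2 * b) ^ 4 + b ^ 4) := by gcongr
    _ = 68 * K * b ^ 4 := by ring

theorem IsAffineArclength.exists_abs_sub_le_of_tangentHeight_eq (haff : IsAffineArclength x)
    (hx : ContDiff ℝ 5 x) (hper : Function.Periodic x c) (hc : 0 < c)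
    (hpos : ∀ s h, 0 < h → h < c → 0 < tangentHeight x s h) :
    ∃ δ > 0, ∃ K > 0, ∀ s a b, 0 < a → 0 < b → b < δ → a + b < c →
      tangentHeight x s a = tangentHeight x s (-b) → |a - b| ≤ K * b ^ 4 := by
  have hx₃ : ContDiff ℝ 3 x := hx.of_le (by norm_num)
  obtain ⟨K₁, hK₁₀, htaylor⟩ := haff.exists_abs_tangentHeight_sub_le hx hper hc.ne'
  obtain ⟨K₂, hcurv⟩ := exists_abs_affineCurvature_le hx₃ hper hc.ne'
  set K := max K₁ K₂
  have hK : 0 < K := hK₁₀.trans_le (le_max_left _ _)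
  set ε := min 1 (1 / 16 / K)
  have hε : 0 < ε := by positivity
  have hsmall {t : ℝ} (ht : t < ε) : t ≤ 1 ∧ K * t ≤ 1 / 16 := by
    obtain ⟨ht₁, htK⟩ := lt_min_iff.1 ht
    exact ⟨ht₁.le, by rw [mul_comm]; exact ((lt_div_iff₀ hK).1 htK).le⟩
  obtain ⟨δ, hδ, hlt⟩ := haff.exists_forall_lt_of_tangentHeight_eq hx₃ hper hc hpos hε
  refine ⟨min δ ε, by positivity, 68 * K, by positivity, fun s a b ha hb hbδ hab heq ↦ ?_⟩
  obtain ⟨hbδ, hbε⟩ := lt_min_iff.1 hbδ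
  obtain ⟨ha₁, hKa⟩ := hsmall (hlt s a b hb hbδ hab heq)
  obtain ⟨hb₁, hKb⟩ := hsmall hbε
  have htaylor' (h : ℝ) : |tangentHeight x s h - (h ^ 2 / 2 - affineCurvature x s * h ^ 4 / 24)| ≤
      K * |h| ^ 5 := (htaylor s h).trans (by gcongr; exact le_max_left _ _)
  refine abs_sub_le_of_quartic_approx ha hb ha₁ hb₁ hKa hKb ((hcurv s).trans (le_max_right _ _))
    (y := tangentHeight x s a) (by simpa [abs_of_pos ha] using htaylor' a) ?_
  rw [heq]
  simpa [abs_of_pos hb, Even.neg_pow (by decide : Even 4)] using htaylor' (-b)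

end NearbyChords

section BestPolygons

open Set

theorem range_eq_insert_image_Ioo {α : Type*} {f : ℤ → α} {n : ℤ} (hf : Function.Periodic f n)
    (hn : 0 < n) (i : ℤ) : range f = insert (f i) (f '' Ioo i (i + n)) := by
  rw [← hf.image_Ioc hn i, ← Ioo_insert_right (by omega), image_insert_eq, hf i]

variable {x : ℝ → ℝ × ℝ} {c : ℝ}

theorem IsCounterclockwise.om_nonpos (hccw : IsCounterclockwise x c)
    (hper : Function.Periodic x c) {a b t : ℝ} (hab : a < b) (ht : t ∈ Icc b (a + c)) :
    om (x t - x a) (x b - x a) ≤ 0 := by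
  rcases ht.1.eq_or_lt with rfl | hbt
  · rw [om_self]
  rcases ht.2.eq_or_lt with rfl | hta
  · rw [hper, sub_self, om_zero_left]
  · rw [← om_neg_swap, neg_nonpos]
    exact (hccw hab hbt hta).le

theorem IsCounterclockwise.volume_real_convexHull_insert (hccw : IsCounterclockwise x c)
    (hper : Function.Periodic x c) {C : Set (ℝ × ℝ)} (hC : StrictConvex ℝ C) (hcl : IsClosed C)
    (hfr : ∀ t, x t ∈ frontier C) {a b t : ℝ} (hat : a < t) (htb : t < b) (hba : b < a + c)
    {T : Set ℝ} (hT : T.Finite) (hTsub : T ⊆ Icc b (a + c)) (haT : a + c ∈ T) (hbT : b ∈ T) :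
    volume.real (convexHull ℝ (insert (x t) (x '' T))) =
      volume.real (convexHull ℝ (x '' T)) + om (x t - x a) (x b - x a) / 2 := by
  have hxC (t : ℝ) : x t ∈ C := hcl.frontier_subset (hfr t)
  have hpos := hccw hat htb hba
  have hne : x a ≠ x b := fun h ↦ by simp [h] at hpos
  refine _root_.volume_real_convexHull_insert (hT.image x) ⟨a + c, haT, hper a⟩
    (mem_image_of_mem x hbT) ?_ hpos.le fun q hq hzero ↦ ?_
  · rintro _ ⟨u, hu, rfl⟩
    exact hccw.om_nonpos hper (hat.trans htb) (hTsub hu)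
  · have hqC : q ∈ C := convexHull_min
      (insert_subset (hxC t) (image_subset_iff.2 fun u _ ↦ hxC u)) hC.convex hq
    exact mem_segment_of_collinear hC (hxC a) hqC (hxC b) (hfr a) (hfr b) hne
      (collinear_of_om_eq_zero hzero)

/-- The points `x (s i)` are, in cyclic order, the vertices of an `n`-gon inscribed in the closed
curve `x` of period `c`, and its area is the largest one that the convex hull of at most `n` points
of the curve can have. -/
structure IsBestInscribedPolygon (x : ℝ → ℝ × ℝ) (c : ℝ) (n : ℕ) (s : ℤ → ℝ) : Prop where
  strictMono : StrictMono s
  add_natCast : ∀ i, s (i + n) = s i + c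
  volume_real_le : ∀ S : Finset (ℝ × ℝ), ↑S ⊆ range x → S.card ≤ n →
    volume.real (convexHull ℝ (S : Set (ℝ × ℝ))) ≤ volume.real (convexHull ℝ (range (x ∘ s)))

namespace IsBestInscribedPolygon

variable {n : ℕ} {s : ℤ → ℝ}

theorem of_eq_sSup {C : Set (ℝ × ℝ)} (hcomp : IsCompact C) (hC : Convex ℝ C)
    (hrange : range x ⊆ frontier C) (hper : Function.Periodic x c) (hn : 0 < n)
    (hs : StrictMono s) (hcyc : ∀ i, s (i + n) = s i + c)
    (hbest : volume.real (convexHull ℝ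
        (((Finset.Icc (1 : ℤ) n).image fun i ↦ x (s i) : Finset (ℝ × ℝ)) : Set (ℝ × ℝ))) =
      sSup {A : ℝ | ∃ S : Finset (ℝ × ℝ), ↑S ⊆ frontier C ∧ S.card ≤ n ∧
        A = volume.real (convexHull ℝ (S : Set (ℝ × ℝ)))}) :
    IsBestInscribedPolygon x c n s where
  strictMono := hs
  add_natCast := hcyc
  volume_real_le S hS hcard := by
    have hvertices : (((Finset.Icc (1 : ℤ) n).image fun i ↦ x (s i) : Finset (ℝ × ℝ)) :
        Set (ℝ × ℝ)) = range (x ∘ s) := by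
      have hxs : Function.Periodic (x ∘ s) (n : ℤ) := fun i ↦ by simp [hcyc, hper _]
      rw [Finset.coe_image, Finset.coe_Icc, ← hxs.image_Ioc (by exact_mod_cast hn) 0, zero_add]
      rfl
    rw [← hvertices, hbest]
    refine le_csSup ⟨volume.real C, ?_⟩ ⟨S, hS.trans hrange, hcard, rfl⟩
    rintro _ ⟨S, hS, -, rfl⟩
    exact measureReal_mono (convexHull_min (hS.trans hcomp.isClosed.frontier_subset) hC)
      hcomp.measure_ne_top

theorem isMaxOn_om (h : IsBestInscribedPolygon x c n s) (hn : 3 ≤ n)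
    (hccw : IsCounterclockwise x c) (hper : Function.Periodic x c) {C : Set (ℝ × ℝ)}
    (hC : StrictConvex ℝ C) (hcl : IsClosed C) (hfr : ∀ t, x t ∈ frontier C) (i : ℤ) :
    IsMaxOn (fun t ↦ om (x t - x (s (i - 1))) (x (s (i + 1)) - x (s (i - 1))))
      (Ioo (s (i - 1)) (s (i + 1))) (s i) := by
  have hs := h.strictMono
  have hlast : s (i + n - 1) = s (i - 1) + c := by rw [add_sub_right_comm, h.add_natCast]
  have hwrap : s (i + 1) < s (i - 1) + c := hlast ▸ hs (by omega)
  have harea {t : ℝ} (ht : t ∈ Ioo (s (i - 1)) (s (i + 1))) :=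
    hccw.volume_real_convexHull_insert hper hC hcl hfr ht.1 ht.2 hwrap
      ((finite_Ioo i (i + n)).image s)
      (image_subset_iff.2 fun j hj ↦ ⟨hs.monotone hj.1, hlast ▸ hs.monotone (by grind)⟩)
      ⟨i + n - 1, ⟨by omega, by omega⟩, hlast⟩ ⟨i + 1, ⟨by omega, by omega⟩, rfl⟩
  have hvertices : range (x ∘ s) = insert (x (s i)) (x '' (s '' Ioo i (i + n))) := by
    have hxs : Function.Periodic (x ∘ s) (n : ℤ) := fun i ↦ by simp [h.add_natCast, hper _]
    rw [range_eq_insert_image_Ioo hxs (by omega) i, image_comp, Function.comp_apply]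
  intro t ht
  have hcard : (insert (x t) ((Finset.Ioo i (i + n)).image (x ∘ s))).card ≤ n :=
    (Finset.card_insert_le _ _).trans <| by
      have := (Finset.card_image_le (s := Finset.Ioo i (i + n)) (f := x ∘ s))
      rw [Int.card_Ioo] at this
      omega
  have hle := h.volume_real_le _ (by
    rw [Finset.coe_insert, Finset.coe_image, insert_subset_iff]
    exact ⟨mem_range_self t, image_subset_iff.2 fun j _ ↦ mem_range_self (s j)⟩) hcard
  rw [Finset.coe_insert, Finset.coe_image, Finset.coe_Ioo, image_comp, hvertices, harea ht,
    harea ⟨hs (by omega), hs (by omega)⟩] at hle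
  simp only [mem_ofPred_eq]
  linarith

theorem tangentHeight_eq (h : IsBestInscribedPolygon x c n s) (hn : 3 ≤ n)
    (hx : Differentiable ℝ x) (hccw : IsCounterclockwise x c) (hper : Function.Periodic x c)
    {C : Set (ℝ × ℝ)} (hC : StrictConvex ℝ C) (hcl : IsClosed C) (hfr : ∀ t, x t ∈ frontier C)
    (i : ℤ) : tangentHeight x (s i) (s (i + 1) - s i) =
      tangentHeight x (s i) (-(s i - s (i - 1))) := by
  have hmax := (h.isMaxOn_om hn hccw hper hC hcl hfr i).isLocalMax
    (Ioo_mem_nhds (h.strictMono (by omega)) (h.strictMono (by omega)))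
  have hparallel := hmax.hasDerivAt_eq_zero
    (hasDerivAt_om_const_right _ ((hx (s i)).hasDerivAt.sub_const _))
  rw [om_sub_right, sub_eq_zero] at hparallel
  rw [tangentHeight, tangentHeight, neg_sub, add_sub_cancel, add_sub_cancel, om_sub_right,
    om_sub_right, hparallel]

end IsBestInscribedPolygon

end BestPolygons

theorem stmt_6_general {x : ℝ → ℝ × ℝ} {c : ℝ} {C : Set (ℝ × ℝ)} (hc : 0 < c)
    (hx : ContDiff ℝ 5 x) (haff : IsAffineArclength x) (hper : Function.Periodic x c)
    (hinj : Set.InjOn x (Set.Ico 0 c)) (hC : StrictConvex ℝ C) (hcl : IsClosed C)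
    (hfr : ∀ t, x t ∈ frontier C) :
    ∃ D > 0, ∀ n : ℕ, 3 ≤ n → ∀ s, IsBestInscribedPolygon x c n s →
      ∀ i, |s i - s (i - 1) - c / n| ≤ D / (n : ℝ) ^ 3 := by
  have hdiff : Differentiable ℝ x := hx.differentiable (by norm_num)
  have hccw := haff.isCounterclockwise (hx.of_le (by norm_num)) hper hc hinj hC hcl hfr
  obtain ⟨δ, hδ, K, hK, hnearby⟩ := haff.exists_abs_sub_le_of_tangentHeight_eq hx hper hc
    fun s h ↦ hccw.tangentHeight_pos hdiff (haff.deriv_ne_zero s)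
  obtain ⟨D, hD, hgap⟩ := exists_abs_gap_sub_le hc hδ hK (p := 3) (by norm_num)
  refine ⟨D, hD, fun n hn s hbest ↦ hgap n (by omega) s hbest.strictMono hbest.add_natCast
    fun i hi ↦ hnearby (s i) _ _ (sub_pos.2 (hbest.strictMono (by omega)))
      (sub_pos.2 (hbest.strictMono (by omega))) hi ?_
      (hbest.tangentHeight_eq hn hdiff hccw hper hC hcl hfr i)⟩
  have hwrap : s (i + 1) < s (i - 1) + c :=
    hbest.add_natCast (i - 1) ▸ hbest.strictMono (by omega)
  linarith

theorem stmt_6 (x : ℝ → ℝ × ℝ) (lam : ℝ) (hlam : 0 < lam)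
    (hx : ContDiff ℝ (⊤ : ℕ∞) x)
    (haff : ∀ t : ℝ, om (deriv x t) (iteratedDeriv 2 x t) = 1)
    (hper : ∀ t : ℝ, x (t + lam) = x t)
    (hinj : Set.InjOn x (Set.Ico 0 lam))
    (C : Set (ℝ × ℝ)) (hC : C = convexHull ℝ (x '' Set.Icc 0 lam))
    (hcomp : IsCompact C) (hconv : StrictConvex ℝ C)
    (hbd : x '' Set.Icc 0 lam = frontier C)
    (k : ℝ → ℝ) (hk : ∀ t : ℝ, k t = om (iteratedDeriv 2 x t) (iteratedDeriv 3 x t))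
    -- the vertex parameters of best approximating inscribed polygons
    (s : ℕ → ℤ → ℝ)
    (hs0 : ∀ n : ℕ, 3 ≤ n → 0 ≤ s n 1)
    (hmono : ∀ n : ℕ, 3 ≤ n → ∀ i : ℤ, 1 ≤ i → i < (n : ℤ) → s n i < s n (i + 1))
    (hlast : ∀ n : ℕ, 3 ≤ n → s n (n : ℤ) < lam)
    (hcyc : ∀ n : ℕ, 3 ≤ n → ∀ i : ℤ, s n (i + (n : ℤ)) = s n i + lam)
    (hbest : ∀ n : ℕ, 3 ≤ n →
      (volume (convexHull ℝ
        (((Finset.Icc (1 : ℤ) (n : ℤ)).image fun i => x (s n i) : Finset (ℝ × ℝ)) :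
          Set (ℝ × ℝ)))).toReal =
      sSup { A : ℝ | ∃ S : Finset (ℝ × ℝ), ↑S ⊆ frontier C ∧ S.card ≤ n ∧
        A = (volume (convexHull ℝ (S : Set (ℝ × ℝ)))).toReal })
    -- the arc lengths λ_{n,i}
    (lamn : ℕ → ℤ → ℝ) (hlamn : ∀ n : ℕ, ∀ i : ℤ, lamn n i = s n i - s n (i - 1)) :
    -- conclusion: |λ_{n,i} − λ/n| ≤ D/n³ for all n ≥ N, 1 ≤ i ≤ n
    ∃ D > (0 : ℝ), ∃ N : ℕ, ∀ n : ℕ, N ≤ n → ∀ i : ℤ, 1 ≤ i → i ≤ (n : ℤ) →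
      |lamn n i - lam / n| ≤ D / (n : ℝ) ^ 3 := by
  have hper' : Function.Periodic x lam := hper
  have hrange : Set.range x = frontier C := by
    rw [← hbd, ← hper'.image_Icc hlam 0, zero_add]
  obtain ⟨D, hD, hgap⟩ := stmt_6_general hlam (hx.of_le (by norm_cast)) haff hper' hinj
    hconv hcomp.isClosed fun t ↦ hrange ▸ Set.mem_range_self t
  refine ⟨D, hD, 3, fun n hn i _ _ ↦ ?_⟩
  have hs : StrictMono (s n) := strictMono_of_cyclic (by omega) (hcyc n hn) (hmono n hn)
    (by linarith [hs0 n hn, hlast n hn])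
  rw [hlamn]
  exact hgap n hn (s n) (.of_eq_sSup hcomp hconv.convex hrange.subset hper' (by omega) hs
    (hcyc n hn) (hbest n hn)) i
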